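/- Objective bound under a fixed indicator for the regularized relaxation: suppose (x*, t*, z*) is an optimal solution attaining η_CR and let α and δ be defined from x*. Fix an index j. If μ − γ·δ_j ≥ 0, then every (x, t, z) feasible for the conic relaxation (t_l ≥ 0, z ∈ [0,1]^n, x_l² ≤ z_l t_l for all l) with z_j = 1 satisfies L(x) + (1/γ) Σ_{l=1}^n t_l + μ Σ_{l=1}^n z_l ≥ η_CR + (μ − γ·δ_j). Symmetrically, if μ − γ·δ_j ≤ 0, then every such feasible (x, t, z) with z_j = 0 satisfies L(x) + (1/γ) Σ_{l=1}^n t_l + μ Σ_{l=1}^n z_l ≥ η_CR − (μ − γ·δ_j). -/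

import Mathlib

/-- The logistic loss `L(x) = (1/m) ∑ᵢ log (1 + exp (-yᵢ (A x)ᵢ))`. -/
noncomputable def logLoss (m n : ℕ) (A : Fin m → Fin n → ℝ) (y : Fin m → ℝ)
    (x : Fin n → ℝ) : ℝ :=
  (1 / (m : ℝ)) * ∑ i, Real.log (1 + Real.exp (-(y i) * ∑ j, A i j * x j))

/-- The dual vector at `x`. -/
noncomputable def alphaAt (m n : ℕ) (A : Fin m → Fin n → ℝ) (y : Fin m → ℝ)
    (x : Fin n → ℝ) (i : Fin m) : ℝ :=
  y i / ((m : ℝ) * (1 + Real.exp (y i * ∑ j, A i j * x j)))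

lemma logistic_tangent (u v : ℝ) :
    Real.log (1 + Real.exp (-u)) - (v - u) / (1 + Real.exp u) ≤
      Real.log (1 + Real.exp (-v)) := by
  have hu := Real.exp_pos u
  have hnu := Real.exp_pos (-u)
  have hnv := Real.exp_pos (-v)
  set p : ℝ := 1 / (1 + Real.exp u) with hp
  have hp0 : 0 ≤ p := by positivity
  have hp1 : p ≤ 1 := by
    rw [hp, div_le_one (by positivity)]; linarith
  have hc := convexOn_exp.2 (Set.mem_univ (0 : ℝ)) (Set.mem_univ (u - v))
    (sub_nonneg.2 hp1) hp0 (by ring)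
  simp only [smul_eq_mul, mul_zero, zero_add, Real.exp_zero, mul_one] at hc
  have hEq : 1 + Real.exp (-v) = (1 + Real.exp (-u)) * (1 - p + p * Real.exp (u - v)) := by
    rw [hp, Real.exp_sub, Real.exp_neg, Real.exp_neg]
    have := Real.exp_pos v
    field_simp
    ring
  have hle : Real.exp (p * (u - v)) * (1 + Real.exp (-u)) ≤ 1 + Real.exp (-v) := by
    rw [hEq, mul_comm]
    exact mul_le_mul_of_nonneg_left hc (by positivity)
  have hl := Real.log_le_log (by positivity) hle
  rw [Real.log_mul (by positivity) (by positivity), Real.log_exp] at hl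
  have : (v - u) / (1 + Real.exp u) = - (p * (u - v)) := by rw [hp]; ring
  linarith

lemma logLoss_tangent (m n : ℕ) (hm : 0 < m) (A : Fin m → Fin n → ℝ) (y : Fin m → ℝ)
    (x x' : Fin n → ℝ) :
    logLoss m n A y x - ∑ l, (∑ i, alphaAt m n A y x i * A i l) * (x' l - x l) ≤
      logLoss m n A y x' := by
  have hm' : (0 : ℝ) < m := by exact_mod_cast hm
  have h1 : ∑ l, (∑ i, alphaAt m n A y x i * A i l) * (x' l - x l)
      = (1 / (m : ℝ)) * ∑ i, (y i * (∑ l, A i l * x' l) - y i * (∑ l, A i l * x l))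
          / (1 + Real.exp (y i * ∑ l, A i l * x l)) := by
    simp_rw [Finset.sum_mul]
    rw [Finset.sum_comm, Finset.mul_sum]
    refine Finset.sum_congr rfl fun i _ => ?_
    have : y i * (∑ l, A i l * x' l) - y i * (∑ l, A i l * x l)
        = y i * ∑ l, A i l * (x' l - x l) := by
      rw [← mul_sub, ← Finset.sum_sub_distrib]
      simp_rw [mul_sub]
    rw [this]
    simp_rw [mul_assoc]
    rw [← Finset.mul_sum, alphaAt]
    have := Real.exp_pos (y i * ∑ l, A i l * x l)
    field_simp
  rw [h1, logLoss, logLoss, ← mul_sub, ← Finset.sum_sub_distrib]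
  refine mul_le_mul_of_nonneg_left (Finset.sum_le_sum fun i _ => ?_) (by positivity)
  have := logistic_tangent (y i * ∑ l, A i l * x l) (y i * ∑ l, A i l * x' l)
  simpa only [neg_mul] using this

lemma cone_segment (x1 t1 z1 x2 t2 z2 s : ℝ) (hs0 : 0 ≤ s) (hs1 : s ≤ 1)
    (ht1 : 0 ≤ t1) (hz1 : 0 ≤ z1) (h1 : x1 ^ 2 ≤ z1 * t1)
    (ht2 : 0 ≤ t2) (hz2 : 0 ≤ z2) (h2 : x2 ^ 2 ≤ z2 * t2) :
    (x1 + s * (x2 - x1)) ^ 2 ≤ (z1 + s * (z2 - z1)) * (t1 + s * (t2 - t1)) := by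
  have hcross : 2 * (x1 * x2) ≤ z1 * t2 + z2 * t1 := by
    have hnn : 0 ≤ z1 * t2 + z2 * t1 := by positivity
    refine le_of_abs_le (abs_le_of_sq_le_sq ?_ hnn)
    have := mul_le_mul h1 h2 (sq_nonneg _) (by positivity)
    nlinarith [sq_nonneg (z1 * t2 - z2 * t1)]
  have e : (z1 + s * (z2 - z1)) * (t1 + s * (t2 - t1)) - (x1 + s * (x2 - x1)) ^ 2
      = (1 - s) ^ 2 * (z1 * t1 - x1 ^ 2) + s ^ 2 * (z2 * t2 - x2 ^ 2)
        + s * (1 - s) * (z1 * t2 + z2 * t1 - 2 * (x1 * x2)) := by ring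
  have a1 := mul_nonneg (sq_nonneg (1 - s)) (sub_nonneg.2 h1)
  have a2 := mul_nonneg (sq_nonneg s) (sub_nonneg.2 h2)
  have a3 := mul_nonneg (mul_nonneg hs0 (sub_nonneg.2 hs1)) (sub_nonneg.2 hcross)
  linarith

lemma term_bound (γ μ g x t z : ℝ) (hγ : 0 < γ) (ht : 0 ≤ t) (hz : 0 ≤ z)
    (h : x ^ 2 ≤ z * t) :
    (μ - γ * ((1 / 4) * g ^ 2)) * z ≤ - (g * x) + (1 / γ) * t + μ * z := by
  have hnn : 0 ≤ (1 / γ) * t + γ * ((1 / 4) * g ^ 2) * z := by positivity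
  have : g * x ≤ (1 / γ) * t + γ * ((1 / 4) * g ^ 2) * z := by
    refine le_of_abs_le (abs_le_of_sq_le_sq ?_ hnn)
    have h1 := mul_le_mul_of_nonneg_left h (sq_nonneg g)
    have h2 : ((1 / γ) * t) * (γ * ((1 / 4) * g ^ 2) * z) = g ^ 2 * (z * t) / 4 := by
      field_simp
    nlinarith [sq_nonneg ((1 / γ) * t - γ * ((1 / 4) * g ^ 2) * z)]
  linarith

/-- Objective bound under a fixed indicator for the regularized relaxation:
if `(xs, ts, zs)` is an optimal solution attaining `ηCR` and `α`, `δ` are defined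
from `xs`, then for a fixed index `j`: if `μ - γ δ_j ≥ 0`, every feasible `(x, t, z)`
of the conic relaxation with `z j = 1` has objective at least `ηCR + (μ - γ δ_j)`;
if `μ - γ δ_j ≤ 0`, every feasible `(x, t, z)` with `z j = 0` has objective at least
`ηCR - (μ - γ δ_j)`. -/
theorem objective_bound_fixed_indicator_REG
    (m n : ℕ) (hm : 0 < m) (hn : 0 < n)
    (A : Fin m → Fin n → ℝ) (y : Fin m → ℝ) (hy : ∀ i, y i = 1 ∨ y i = -1)
    (γ μ : ℝ) (hγ : 0 < γ) (hμ : 0 < μ)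
    -- (xs, ts, zs) is an optimal solution of the conic relaxation attaining ηCR
    (xs ts zs : Fin n → ℝ)
    (hts : ∀ l, 0 ≤ ts l) (hzs : ∀ l, 0 ≤ zs l ∧ zs l ≤ 1)
    (hcone_s : ∀ l, (xs l) ^ 2 ≤ zs l * ts l)
    (hopt : ∀ x t z : Fin n → ℝ, (∀ l, 0 ≤ t l) → (∀ l, 0 ≤ z l ∧ z l ≤ 1) →
      (∀ l, (x l) ^ 2 ≤ z l * t l) →
      logLoss m n A y xs + (1 / γ) * ∑ l, ts l + μ * ∑ l, zs l ≤
        logLoss m n A y x + (1 / γ) * ∑ l, t l + μ * ∑ l, z l)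
    (ηCR : ℝ)
    (hηCR : ηCR = logLoss m n A y xs + (1 / γ) * ∑ l, ts l + μ * ∑ l, zs l)
    -- dual quantities defined from xs
    (α : Fin m → ℝ)
    (hα : ∀ i, α i = y i / ((m : ℝ) * (1 + Real.exp (y i * ∑ j, A i j * xs j))))
    (δ : Fin n → ℝ)
    (hδ : ∀ l, δ l = (1 / 4) * (∑ i, α i * A i l) ^ 2)
    (j : Fin n) :
    (0 ≤ μ - γ * δ j →
      ∀ x t z : Fin n → ℝ, (∀ l, 0 ≤ t l) → (∀ l, 0 ≤ z l ∧ z l ≤ 1) →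
        (∀ l, (x l) ^ 2 ≤ z l * t l) → z j = 1 →
        ηCR + (μ - γ * δ j) ≤
          logLoss m n A y x + (1 / γ) * ∑ l, t l + μ * ∑ l, z l) ∧
    (μ - γ * δ j ≤ 0 →
      ∀ x t z : Fin n → ℝ, (∀ l, 0 ≤ t l) → (∀ l, 0 ≤ z l ∧ z l ≤ 1) →
        (∀ l, (x l) ^ 2 ≤ z l * t l) → z j = 0 →
        ηCR - (μ - γ * δ j) ≤
          logLoss m n A y x + (1 / γ) * ∑ l, t l + μ * ∑ l, z l) := by
  classical
  have hα' : α = alphaAt m n A y xs := funext hα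
  set g : Fin n → ℝ := fun l => ∑ i, α i * A i l with hg
  set c : Fin n → ℝ := fun l => μ - γ * δ l with hc
  have hcl : ∀ l, c l = μ - γ * ((1 / 4) * (g l) ^ 2) := fun l => by simp only [hc, hg, hδ]
  -- first-order optimality along segments
  have hfo : ∀ x t z : Fin n → ℝ, (∀ l, 0 ≤ t l) → (∀ l, 0 ≤ z l ∧ z l ≤ 1) →
      (∀ l, (x l) ^ 2 ≤ z l * t l) →
      ∑ l, g l * (x l - xs l) ≤
        (1 / γ) * ∑ l, (t l - ts l) + μ * ∑ l, (z l - zs l) := by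
    intro x t z ht hz hx
    let P : ℝ → Fin n → ℝ := fun s l => xs l + s * (x l - xs l)
    let G : ℝ → ℝ := fun s => ∑ l, (∑ i, alphaAt m n A y (P s) i * A i l) * (x l - xs l)
    have hGc : Continuous G := by
      have hne : ∀ (i : Fin m) (s : ℝ),
          (m : ℝ) * (1 + Real.exp (y i * ∑ j, A i j * (xs j + s * (x j - xs j)))) ≠ 0 := by
        intro i s
        have hm' : (0 : ℝ) < m := by exact_mod_cast hm
        positivity
      simp only [G, P, alphaAt]
      refine continuous_finsetSum _ fun l _ => Continuous.mul ?_ continuous_const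
      refine continuous_finsetSum _ fun i _ => Continuous.mul ?_ continuous_const
      exact Continuous.div continuous_const (by fun_prop) (hne i)
    have hG0 : G 0 = ∑ l, g l * (x l - xs l) := by
      simp only [G, P, hg, hα', zero_mul, add_zero]
    have hle : ∀ s ∈ Set.Ioc (0 : ℝ) 1,
        G s ≤ (1 / γ) * ∑ l, (t l - ts l) + μ * ∑ l, (z l - zs l) := by
      rintro s ⟨hs0, hs1⟩
      have h1 := hopt (P s) (fun l => ts l + s * (t l - ts l)) (fun l => zs l + s * (z l - zs l))
        (fun l => by nlinarith [hts l, ht l])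
        (fun l => by
          have := hz l
          have := hzs l
          constructor <;> nlinarith)
        (fun l => cone_segment _ _ _ _ _ _ s hs0.le hs1 (hts l) (hzs l).1 (hcone_s l)
          (ht l) (hz l).1 (hx l))
      have h2 := logLoss_tangent m n hm A y (P s) xs
      have h3 : ∑ l, (∑ i, alphaAt m n A y (P s) i * A i l) * (xs l - P s l) = - (s * G s) := by
        simp only [G]
        rw [Finset.mul_sum, ← Finset.sum_neg_distrib]
        refine Finset.sum_congr rfl fun l _ => ?_
        simp only [P]
        ring
      simp only [Finset.sum_add_distrib, ← Finset.mul_sum] at h1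
      rw [h3] at h2
      refine le_of_mul_le_mul_left ?_ hs0
      linarith
    rw [← hG0]
    have htend : Filter.Tendsto G (nhdsWithin 0 (Set.Ioi 0)) (nhds (G 0)) :=
      (hGc.tendsto 0).mono_left nhdsWithin_le_nhds
    refine le_of_tendsto htend ?_
    filter_upwards [Ioc_mem_nhdsGT (zero_lt_one' ℝ)] with s hs using hle s hs
  -- strong duality
  have hdual : ∑ l, (-(g l * xs l)) + (1 / γ) * ∑ l, ts l + μ * ∑ l, zs l
      ≤ ∑ l, min 0 (c l) := by
    let w : Fin n → ℝ := fun l => if c l < 0 then 1 else 0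
    have hw : ∀ l, w l = 0 ∨ w l = 1 := fun l => by
      by_cases h : c l < 0 <;> simp [w, h]
    have h := hfo (fun l => γ * g l / 2 * w l) (fun l => γ ^ 2 * g l ^ 2 / 4 * w l) w
      (fun l => by rcases hw l with h | h <;> rw [h] <;> positivity)
      (fun l => by rcases hw l with h | h <;> rw [h] <;> norm_num)
      (fun l => by rcases hw l with h | h <;> rw [h] <;> nlinarith)
    have e : ∑ l, min 0 (c l) = ∑ l, (-(g l * (γ * g l / 2 * w l))
        + (1 / γ) * (γ ^ 2 * g l ^ 2 / 4 * w l) + μ * w l) := by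
      refine Finset.sum_congr rfl fun l _ => ?_
      have e1 : -(g l * (γ * g l / 2 * w l)) + (1 / γ) * (γ ^ 2 * g l ^ 2 / 4 * w l) + μ * w l
          = c l * w l := by
        rw [hcl]
        field_simp
        ring
      rw [e1]
      by_cases h : c l < 0
      · simp [w, h, h.le]
      · simp [w, h, not_lt.1 h]
    rw [e]
    simp only [mul_sub, Finset.sum_sub_distrib, Finset.sum_add_distrib, Finset.sum_neg_distrib,
      ← Finset.mul_sum] at h ⊢
    linarith
  -- lower bound for every feasible point
  have hlow : ∀ x t z : Fin n → ℝ, (∀ l, 0 ≤ t l) → (∀ l, 0 ≤ z l ∧ z l ≤ 1) →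
      (∀ l, (x l) ^ 2 ≤ z l * t l) →
      ηCR + (c j * z j - min 0 (c j)) ≤
        logLoss m n A y x + (1 / γ) * ∑ l, t l + μ * ∑ l, z l := by
    intro x t z ht hz hx
    have h1 := logLoss_tangent m n hm A y xs x
    rw [← hα'] at h1
    change logLoss m n A y xs - ∑ l, g l * (x l - xs l) ≤ _ at h1
    have h2 : ∑ l, c l * z l ≤ ∑ l, (-(g l * x l) + (1 / γ) * t l + μ * z l) :=
      Finset.sum_le_sum fun l _ => by
        rw [hcl]
        exact term_bound γ μ (g l) (x l) (t l) (z l) hγ (ht l) (hz l).1 (hx l)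
    have h3 : c j * z j - min 0 (c j) ≤ ∑ l, (c l * z l - min 0 (c l)) :=
      Finset.single_le_sum (f := fun l => c l * z l - min 0 (c l)) (fun l _ => by
        have := hz l
        rcases le_total 0 (c l) with h | h
        · rw [min_eq_left h]; nlinarith
        · rw [min_eq_right h]; nlinarith) (Finset.mem_univ j)
    simp only [mul_sub, Finset.sum_sub_distrib, Finset.sum_add_distrib, Finset.sum_neg_distrib,
      ← Finset.mul_sum] at h1 h2 h3 hdual
    linarith
  refine ⟨fun h x t z ht hz hx hj => ?_, fun h x t z ht hz hx hj => ?_⟩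
  · have := hlow x t z ht hz hx
    rw [min_eq_left (show 0 ≤ c j from h), hj] at this
    simpa [hc] using this
  · have := hlow x t z ht hz hx
    rw [min_eq_right (show c j ≤ 0 from h), hj] at this
    simp only [hc] at this
    linarith
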